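/- If an interpretation J (over a domain D) is not maximally diverse for a PEUF p-formula F, then there is an interpretation J' (over the domain D extended by one fresh element) that is a proper refinement of J for the term set T(F) and satisfies: if J'[F] is true then J[F] is true. -/

import Mathlib

mutual
inductive EufTerm (Fn Pr : Type) : Type
  | app : Fn → List (EufTerm Fn Pr) → EufTerm Fn Pr
  | ite : EufFormula Fn Pr → EufTerm Fn Pr → EufTerm Fn Pr → EufTerm Fn Pr
inductive EufFormula (Fn Pr : Type) : Type
  | tt : EufFormula Fn Pr
  | ff : EufFormula Fn Pr
  | not : EufFormula Fn Pr → EufFormula Fn Pr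
  | and : EufFormula Fn Pr → EufFormula Fn Pr → EufFormula Fn Pr
  | or : EufFormula Fn Pr → EufFormula Fn Pr → EufFormula Fn Pr
  | eq : EufTerm Fn Pr → EufTerm Fn Pr → EufFormula Fn Pr
  | papp : Pr → List (EufTerm Fn Pr) → EufFormula Fn Pr
end

structure Interp (Fn Pr : Type) (D : Type u) where
  fn : Fn → List D → D
  pr : Pr → List D → Bool

open Classical in
mutual
noncomputable def evalT {Fn Pr : Type} {D : Type} (I : Interp Fn Pr D) : EufTerm Fn Pr → D
  | .app f args => I.fn f (args.attach.map (fun t => evalT I t.1))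
  | .ite G T1 T2 => if evalF I G then evalT I T1 else evalT I T2
termination_by t => sizeOf t
decreasing_by
  all_goals simp_wf
  all_goals try omega
  all_goals (have := List.sizeOf_lt_of_mem t.2; omega)
noncomputable def evalF {Fn Pr : Type} {D : Type} (I : Interp Fn Pr D) : EufFormula Fn Pr → Bool
  | .tt => true
  | .ff => false
  | .not G => !evalF I G
  | .and G1 G2 => evalF I G1 && evalF I G2
  | .or G1 G2 => evalF I G1 || evalF I G2
  | .eq T1 T2 => decide (evalT I T1 = evalT I T2)
  | .papp p args => I.pr p (args.attach.map (fun t => evalT I t.1))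
termination_by g => sizeOf g
decreasing_by
  all_goals simp_wf
  all_goals try omega
  all_goals (have := List.sizeOf_lt_of_mem t.2; omega)
end
def ValidOn {Fn Pr : Type} (F : EufFormula Fn Pr) (D : Type) : Prop :=
  ∀ I : Interp Fn Pr D, evalF I F = true

def UniversallyValid {Fn Pr : Type} (F : EufFormula Fn Pr) : Prop :=
  ∀ D : Type, Nonempty D → ValidOn F D

/-- Expressions: terms or formulas. -/
inductive EufExpr (Fn Pr : Type) : Type
  | t : EufTerm Fn Pr → EufExpr Fn Pr
  | f : EufFormula Fn Pr → EufExpr Fn Pr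

/-- Immediate (proper) subexpression relation. -/
inductive ImmSub {Fn Pr : Type} : EufExpr Fn Pr → EufExpr Fn Pr → Prop
  | appArg {g : Fn} {args : List (EufTerm Fn Pr)} {T : EufTerm Fn Pr} :
      T ∈ args → ImmSub (.t T) (.t (.app g args))
  | iteC {G : EufFormula Fn Pr} {T1 T2 : EufTerm Fn Pr} : ImmSub (.f G) (.t (.ite G T1 T2))
  | ite1 {G : EufFormula Fn Pr} {T1 T2 : EufTerm Fn Pr} : ImmSub (.t T1) (.t (.ite G T1 T2))
  | ite2 {G : EufFormula Fn Pr} {T1 T2 : EufTerm Fn Pr} : ImmSub (.t T2) (.t (.ite G T1 T2))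
  | not {G : EufFormula Fn Pr} : ImmSub (.f G) (.f (.not G))
  | andL {G1 G2 : EufFormula Fn Pr} : ImmSub (.f G1) (.f (.and G1 G2))
  | andR {G1 G2 : EufFormula Fn Pr} : ImmSub (.f G2) (.f (.and G1 G2))
  | orL {G1 G2 : EufFormula Fn Pr} : ImmSub (.f G1) (.f (.or G1 G2))
  | orR {G1 G2 : EufFormula Fn Pr} : ImmSub (.f G2) (.f (.or G1 G2))
  | eqL {T1 T2 : EufTerm Fn Pr} : ImmSub (.t T1) (.f (.eq T1 T2))
  | eqR {T1 T2 : EufTerm Fn Pr} : ImmSub (.t T2) (.f (.eq T1 T2))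
  | pappArg {p : Pr} {args : List (EufTerm Fn Pr)} {T : EufTerm Fn Pr} :
      T ∈ args → ImmSub (.t T) (.f (.papp p args))

/-- `SubExpr a b`: `a` occurs (as a subexpression) in `b`. -/
def SubExpr {Fn Pr : Type} (a b : EufExpr Fn Pr) : Prop := Relation.ReflTransGen ImmSub a b

def TermInT {Fn Pr : Type} (T S : EufTerm Fn Pr) : Prop := SubExpr (.t T) (.t S)
def TermInF {Fn Pr : Type} (T : EufTerm Fn Pr) (F : EufFormula Fn Pr) : Prop :=
  SubExpr (.t T) (.f F)
def FormulaInT {Fn Pr : Type} (G : EufFormula Fn Pr) (S : EufTerm Fn Pr) : Prop :=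
  SubExpr (.f G) (.t S)
def FormulaInF {Fn Pr : Type} (G F : EufFormula Fn Pr) : Prop := SubExpr (.f G) (.f F)

def IsAppTerm {Fn Pr : Type} : EufTerm Fn Pr → Prop
  | .app _ _ => True
  | _ => False

/-- `𝒯(F)`: the function application terms occurring in `F`. -/
def AppTermsF {Fn Pr : Type} (F : EufFormula Fn Pr) : Set (EufTerm Fn Pr) :=
  {T | IsAppTerm T ∧ TermInF T F}

/-- A function symbol occurs in `F` when some application of it occurs in `F`. -/
def FnInF {Fn Pr : Type} (g : Fn) (F : EufFormula Fn Pr) : Prop :=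
  ∃ args, TermInF (EufTerm.app g args) F

def PrInF {Fn Pr : Type} (p : Pr) (F : EufFormula Fn Pr) : Prop :=
  ∃ args, FormulaInF (EufFormula.papp p args) F

/-- `I` is diverse for `F` with respect to the set `Sg` of function symbols. -/
def DiverseFor {Fn Pr D : Type} (I : Interp Fn Pr D) (F : EufFormula Fn Pr)
    (Sg : Set Fn) : Prop :=
  ∀ (g : Fn) (args : List (EufTerm Fn Pr)), g ∈ Sg →
    TermInF (EufTerm.app g args) F →
    ∀ T2 ∈ AppTermsF F, evalT I (EufTerm.app g args) = evalT I T2 →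
      ∃ args2, T2 = EufTerm.app g args2 ∧
        List.Forall₂ (fun a b => evalT I a = evalT I b) args args2

mutual
/-- PEUF g-terms, where `isP` designates the p-function symbols. -/
inductive IsGTerm {Fn Pr : Type} (isP : Fn → Prop) : EufTerm Fn Pr → Prop
  | ite {G : EufFormula Fn Pr} {T1 T2 : EufTerm Fn Pr} :
      IsGFormula isP G → IsGTerm isP T1 → IsGTerm isP T2 → IsGTerm isP (.ite G T1 T2)
  | app {g : Fn} {args : List (EufTerm Fn Pr)} :
      ¬ isP g → (∀ T ∈ args, IsPTerm isP T) → IsGTerm isP (.app g args)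
/-- PEUF p-terms. -/
inductive IsPTerm {Fn Pr : Type} (isP : Fn → Prop) : EufTerm Fn Pr → Prop
  | g {T : EufTerm Fn Pr} : IsGTerm isP T → IsPTerm isP T
  | ite {G : EufFormula Fn Pr} {T1 T2 : EufTerm Fn Pr} :
      IsGFormula isP G → IsPTerm isP T1 → IsPTerm isP T2 → IsPTerm isP (.ite G T1 T2)
  | app {g : Fn} {args : List (EufTerm Fn Pr)} :
      isP g → (∀ T ∈ args, IsPTerm isP T) → IsPTerm isP (.app g args)
/-- PEUF g-formulas. -/
inductive IsGFormula {Fn Pr : Type} (isP : Fn → Prop) : EufFormula Fn Pr → Prop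
  | tt : IsGFormula isP .tt
  | ff : IsGFormula isP .ff
  | not {G : EufFormula Fn Pr} : IsGFormula isP G → IsGFormula isP (.not G)
  | and {G1 G2 : EufFormula Fn Pr} :
      IsGFormula isP G1 → IsGFormula isP G2 → IsGFormula isP (.and G1 G2)
  | or {G1 G2 : EufFormula Fn Pr} :
      IsGFormula isP G1 → IsGFormula isP G2 → IsGFormula isP (.or G1 G2)
  | eq {T1 T2 : EufTerm Fn Pr} :
      IsGTerm isP T1 → IsGTerm isP T2 → IsGFormula isP (.eq T1 T2)
  | papp {p : Pr} {args : List (EufTerm Fn Pr)} :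
      (∀ T ∈ args, IsPTerm isP T) → IsGFormula isP (.papp p args)
/-- PEUF p-formulas. -/
inductive IsPFormula {Fn Pr : Type} (isP : Fn → Prop) : EufFormula Fn Pr → Prop
  | g {G : EufFormula Fn Pr} : IsGFormula isP G → IsPFormula isP G
  | and {G1 G2 : EufFormula Fn Pr} :
      IsPFormula isP G1 → IsPFormula isP G2 → IsPFormula isP (.and G1 G2)
  | or {G1 G2 : EufFormula Fn Pr} :
      IsPFormula isP G1 → IsPFormula isP G2 → IsPFormula isP (.or G1 G2)
  | eq {T1 T2 : EufTerm Fn Pr} :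
      IsPTerm isP T1 → IsPTerm isP T2 → IsPFormula isP (.eq T1 T2)
end

/-- The p-function symbols occurring in `F`. -/
def PSymbolsIn {Fn Pr : Type} (isP : Fn → Prop) (F : EufFormula Fn Pr) : Set Fn :=
  {g | isP g ∧ FnInF g F}

/-- `I` is maximally diverse for the p-formula `F`. -/
def MaxDiverse {Fn Pr D : Type} (isP : Fn → Prop) (I : Interp Fn Pr D)
    (F : EufFormula Fn Pr) : Prop :=
  DiverseFor I F (PSymbolsIn isP F)

/-- `I'` refines `I` on the term set `Ts`. -/
def RefinesOn {Fn Pr D D' : Type} (I' : Interp Fn Pr D') (I : Interp Fn Pr D)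
    (Ts : Set (EufTerm Fn Pr)) : Prop :=
  ∀ T1 ∈ Ts, ∀ T2 ∈ Ts, evalT I' T1 = evalT I' T2 → evalT I T1 = evalT I T2

def ProperRefinesOn {Fn Pr D D' : Type} (I' : Interp Fn Pr D') (I : Interp Fn Pr D)
    (Ts : Set (EufTerm Fn Pr)) : Prop :=
  RefinesOn I' I Ts ∧
    ∃ T1 ∈ Ts, ∃ T2 ∈ Ts, evalT I T1 = evalT I T2 ∧ evalT I' T1 ≠ evalT I' T2

theorem rl_evalT_app {Fn Pr D : Type} (I : Interp Fn Pr D) (f : Fn)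
    (args : List (EufTerm Fn Pr)) :
    evalT I (.app f args) = I.fn f (args.map (evalT I)) := by
  rw [evalT]
  congr 1
  simp

theorem rl_evalF_papp {Fn Pr D : Type} (I : Interp Fn Pr D) (p : Pr)
    (args : List (EufTerm Fn Pr)) :
    evalF I (.papp p args) = I.pr p (args.map (evalT I)) := by
  rw [evalF]
  congr 1
  simp

open Classical in
/-- The refined interpretation. -/
noncomputable def rlJ {Fn Pr D : Type} (J : Interp Fn Pr D) (f : Fn) (a : List D) :
    Interp Fn Pr (Option D) where
  fn h l := if h = f ∧ l.map (fun o => o.getD (J.fn f a)) = a then none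
    else some (J.fn h (l.map (fun o => o.getD (J.fn f a))))
  pr p l := J.pr p (l.map (fun o => o.getD (J.fn f a)))

theorem rl_map {Fn Pr D : Type} (J : Interp Fn Pr D) (f : Fn) (a : List D)
    (args : List (EufTerm Fn Pr))
    (h : ∀ T ∈ args, (evalT (rlJ J f a) T).getD (J.fn f a) = evalT J T) :
    (args.map (evalT (rlJ J f a))).map (fun o => o.getD (J.fn f a)) = args.map (evalT J) := by
  rw [List.map_map]
  exact List.map_congr_left h

mutual
theorem rl_g {Fn Pr D : Type} {isP : Fn → Prop} (J : Interp Fn Pr D) (f : Fn) (a : List D)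
    (hf : isP f) : ∀ {T : EufTerm Fn Pr}, IsGTerm isP T →
      evalT (rlJ J f a) T = some (evalT J T)
  | _, .ite hG h1 h2 => by
      rw [evalT, evalT, rl_gf J f a hf hG, rl_g J f a hf h1, rl_g J f a hf h2]
      split <;> rfl
  | _, .app hg h => by
      rw [rl_evalT_app, rl_evalT_app]
      have := rl_map J f a _ (fun T hT => rl_p J f a hf (h T hT))
      simp only [rlJ] at this ⊢
      rw [this, if_neg]
      rintro ⟨rfl, -⟩
      exact hg hf
theorem rl_p {Fn Pr D : Type} {isP : Fn → Prop} (J : Interp Fn Pr D) (f : Fn) (a : List D)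
    (hf : isP f) : ∀ {T : EufTerm Fn Pr}, IsPTerm isP T →
      (evalT (rlJ J f a) T).getD (J.fn f a) = evalT J T
  | _, .g h => by rw [rl_g J f a hf h]; rfl
  | _, .ite hG h1 h2 => by
      have e1 := rl_p J f a hf h1
      have e2 := rl_p J f a hf h2
      rw [evalT, evalT, rl_gf J f a hf hG]
      split
      · exact e1
      · exact e2
  | _, .app hg h => by
      rw [rl_evalT_app, rl_evalT_app]
      have := rl_map J f a _ (fun T hT => rl_p J f a hf (h T hT))
      simp only [rlJ] at this ⊢
      rw [this]
      split
      · next hh => rw [hh.1, hh.2]; rfl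
      · rfl
theorem rl_gf {Fn Pr D : Type} {isP : Fn → Prop} (J : Interp Fn Pr D) (f : Fn) (a : List D)
    (hf : isP f) : ∀ {G : EufFormula Fn Pr}, IsGFormula isP G →
      evalF (rlJ J f a) G = evalF J G
  | _, .tt => by rw [evalF, evalF]
  | _, .ff => by rw [evalF, evalF]
  | _, .not h => by rw [evalF, evalF, rl_gf J f a hf h]
  | _, .and h1 h2 => by rw [evalF, evalF, rl_gf J f a hf h1, rl_gf J f a hf h2]
  | _, .or h1 h2 => by rw [evalF, evalF, rl_gf J f a hf h1, rl_gf J f a hf h2]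
  | _, .eq h1 h2 => by
      rw [evalF, evalF, rl_g J f a hf h1, rl_g J f a hf h2]
      simp
  | _, .papp h => by
      rw [rl_evalF_papp, rl_evalF_papp]
      have := rl_map J f a _ (fun T hT => rl_p J f a hf (h T hT))
      simp only [rlJ] at this ⊢
      rw [this]
end

theorem rl_pf {Fn Pr D : Type} {isP : Fn → Prop} (J : Interp Fn Pr D) (f : Fn) (a : List D)
    (hf : isP f) : ∀ {G : EufFormula Fn Pr}, IsPFormula isP G →
      evalF (rlJ J f a) G = true → evalF J G = true
  | _, .g h => by rw [rl_gf J f a hf h]; exact id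
  | _, .and h1 h2 => by
      have e1 := rl_pf J f a hf h1
      have e2 := rl_pf J f a hf h2
      rw [evalF, evalF, Bool.and_eq_true, Bool.and_eq_true]
      exact fun h => ⟨e1 h.1, e2 h.2⟩
  | _, .or h1 h2 => by
      have e1 := rl_pf J f a hf h1
      have e2 := rl_pf J f a hf h2
      rw [evalF, evalF, Bool.or_eq_true, Bool.or_eq_true]
      exact fun h => h.imp e1 e2
  | _, .eq h1 h2 => by
      simp only [evalF, decide_eq_true_eq]
      intro h
      rw [← rl_p J f a hf h1, ← rl_p J f a hf h2, h]

/-- Well-formedness of expressions. -/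
def rlWf {Fn Pr : Type} (isP : Fn → Prop) : EufExpr Fn Pr → Prop
  | .t T => IsPTerm isP T
  | .f G => IsPFormula isP G

theorem rl_imm {Fn Pr : Type} {isP : Fn → Prop} {a b : EufExpr Fn Pr} (h : ImmSub a b)
    (hb : rlWf isP b) : rlWf isP a := by
  cases h with
  | appArg hm =>
    cases hb with
    | g h => cases h with | app _ h => exact h _ hm
    | app _ h => exact h _ hm
  | iteC =>
    cases hb with
    | g h => cases h with | ite h _ _ => exact .g h
    | ite h _ _ => exact .g h
  | ite1 =>
    cases hb with
    | g h => cases h with | ite _ h _ => exact .g h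
    | ite _ h _ => exact h
  | ite2 =>
    cases hb with
    | g h => cases h with | ite _ _ h => exact .g h
    | ite _ _ h => exact h
  | not => cases hb with | g h => cases h with | not h => exact .g h
  | andL =>
    cases hb with
    | g h => cases h with | and h _ => exact .g h
    | and h _ => exact h
  | andR =>
    cases hb with
    | g h => cases h with | and _ h => exact .g h
    | and _ h => exact h
  | orL =>
    cases hb with
    | g h => cases h with | or h _ => exact .g h
    | or h _ => exact h
  | orR =>
    cases hb with
    | g h => cases h with | or _ h => exact .g h
    | or _ h => exact h
  | eqL =>
    cases hb with
    | g h => cases h with | eq h _ => exact .g h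
    | eq h _ => exact h
  | eqR =>
    cases hb with
    | g h => cases h with | eq _ h => exact .g h
    | eq _ h => exact h
  | pappArg hm => cases hb with | g h => cases h with | papp h => exact h _ hm

theorem rl_sub {Fn Pr : Type} {isP : Fn → Prop} {a b : EufExpr Fn Pr} (h : SubExpr a b)
    (hb : rlWf isP b) : rlWf isP a := by
  unfold SubExpr at h
  induction h with
  | refl => exact hb
  | tail _ h ih => exact ih (rl_imm h hb)

theorem rl_app {Fn Pr D : Type} {isP : Fn → Prop} (J : Interp Fn Pr D) (f : Fn) (a : List D)
    (hf : isP f) {h : Fn} {args : List (EufTerm Fn Pr)} (hp : ∀ T ∈ args, IsPTerm isP T) :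
    evalT (rlJ J f a) (.app h args) = none ↔ h = f ∧ args.map (evalT J) = a := by
  rw [rl_evalT_app]
  have := rl_map J f a _ (fun T hT => rl_p J f a hf (hp T hT))
  simp only [rlJ] at this ⊢
  rw [this]
  simp

/-- If `J` is not maximally diverse for the p-formula `F`, then there is a
proper refinement `J'` of `J` for `𝒯(F)`, over the domain `D` extended by one fresh element,
such that `J'[F] ⇒ J[F]`. -/
theorem refine_lemma {Fn Pr D : Type} [Nonempty D] (isP : Fn → Prop)
    (F : EufFormula Fn Pr) (hF : IsPFormula isP F) (J : Interp Fn Pr D)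
    (hnd : ¬ MaxDiverse isP J F) :
    ∃ J' : Interp Fn Pr (Option D),
      ProperRefinesOn J' J (AppTermsF F) ∧
      (evalF J' F = true → evalF J F = true) := by
  have hwf : ∀ T, TermInF T F → IsPTerm isP T := fun T hT =>
    rl_sub (isP := isP) (b := .f F) hT hF
  have hargs : ∀ g args, TermInF (EufTerm.app g args) F → ∀ T ∈ args, IsPTerm isP T :=
    fun g args h T hT => rl_imm (isP := isP) (b := .t (.app g args)) (.appArg hT) (hwf _ h)
  unfold MaxDiverse DiverseFor at hnd
  push Not at hnd
  obtain ⟨f, args, hf, hin, T2, hT2, heq, hno⟩ := hnd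
  refine ⟨rlJ J f (args.map (evalT J)), ⟨?_, ?_⟩, rl_pf J f _ hf.1 hF⟩
  · intro S1 h1 S2 h2 h
    rw [← rl_p J f (args.map (evalT J)) hf.1 (hwf _ h1.2),
      ← rl_p J f (args.map (evalT J)) hf.1 (hwf _ h2.2), h]
  · refine ⟨EufTerm.app f args, ⟨trivial, hin⟩, T2, hT2, heq, ?_⟩
    rw [(rl_app J f _ hf.1 (hargs _ _ hin)).2 ⟨rfl, rfl⟩]
    intro h
    cases T2 with
    | ite G A B => exact hT2.1
    | app g args2 =>
      obtain ⟨rfl, h2⟩ := (rl_app J f _ hf.1 (hargs _ _ hT2.2)).1 h.symm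
      refine hno args2 rfl ?_
      have h3 : List.Forall₂ Eq (args.map (evalT J)) (args2.map (evalT J)) := by
        rw [h2]; exact List.forall₂_refl _
      rw [List.forall₂_map_left_iff, List.forall₂_map_right_iff] at h3
      exact h3
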